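/- Let k ≥ s ≥ r ≥ 2 be integers and let G be an s-uniform hypergraph on k vertices. Define μ_G^{(r,s)} = max over sub-hypergraphs G′ ⊆ G with |V(G′)| ≥ s of |E(G′)| / (|V(G′)| − s + r). Then τ^{(r)}_{P_G} ≥ r − 1/μ_G^{(r,s)}. -/

import Mathlib

open Filter
open scoped ENNReal

namespace SemiRandomHypergraph

/-- The collection of `k`-element subsets of `Fin n`. -/
abbrev Col (n k : ℕ) := {A : Finset (Fin n) // A.card = k}

lemma col_nonempty {n k : ℕ} (h : k ≤ n) : Nonempty (Col n k) := by
  obtain ⟨t, -, ht⟩ :=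
    Finset.exists_subset_card_eq (show k ≤ (Finset.univ : Finset (Fin n)).card by simpa using h)
  exact ⟨⟨t, ht⟩⟩

/-- One round of the semi-random `(r,s)`-hypergraph process: the random `r`-set `U_t`
together with the player's reply, an `(s-r)`-set `V_t` (which may overlap `U_t`). -/
abbrev Step (n r s : ℕ) := Col n r × Col n (s - r)

/-- A strategy of the player: given the history so far (most recent round first) and the
current random `r`-set `U_t`, a probability distribution for the reply `V_t`. -/
def Strategy (n r s : ℕ) := List (Step n r s) → Col n r → PMF (Col n (s - r))

/-- The distribution of the history (most recent round first) after `t` rounds of the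
semi-random hypergraph process played with strategy `S`. -/
noncomputable def historyPMF {n r s : ℕ} (h : Nonempty (Col n r)) (S : Strategy n r s) :
    ℕ → PMF (List (Step n r s))
  | 0 => PMF.pure []
  | t + 1 =>
      (historyPMF h S t).bind fun hist =>
        (@PMF.uniformOfFintype (Col n r) _ h).bind fun U =>
          (S hist U).map fun W => (U, W) :: hist

/-- The multi-hypergraph `H_t^{(r,s)}` (recorded by its history `hist`; the edge created
in a round is the multiset `U_t + V_t`) contains a sub-hypergraph isomorphic to the
hypergraph with edge set `E`. -/
def ContainsCopy {V : Type*} {n r s : ℕ} (E : Finset (Finset V))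
    (hist : List (Step n r s)) : Prop :=
  ∃ φ : V ↪ Fin n, ∀ e ∈ E, ∃ p ∈ hist,
    Multiset.map (φ : V → Fin n) e.val = p.1.1.val + p.2.1.val

/-- The probability that after `t` rounds the multi-hypergraph `H_t^{(r,s)}` built with
strategy `S` contains a copy of the hypergraph with edge set `E`. -/
noncomputable def probContains {V : Type*} (n r s : ℕ) (E : Finset (Finset V))
    (S : Strategy n r s) (t : ℕ) : ℝ≥0∞ :=
  if h : r ≤ n then
    (historyPMF (col_nonempty h) S t).toOuterMeasure {hist | ContainsCopy E hist}
  else 0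

/-- `τ^{(r)}_{P_G}(q, n)`: the least number of rounds needed so that some strategy makes
the probability of containing a copy of `G` at least `q` (`⊤` if impossible). -/
noncomputable def tauQ {V : Type*} (r s : ℕ) (E : Finset (Finset V)) (q : ℝ≥0∞)
    (n : ℕ) : ℕ∞ :=
  ⨅ S : Strategy n r s,
    sInf {c : ℕ∞ | ∃ t : ℕ, c = (t : ℕ∞) ∧ q ≤ probContains n r s E S t}

/-- Logarithm on `ℕ∞`, with `log ⊤ = ⊤`, valued in `EReal`. -/
noncomputable def elog (m : ℕ∞) : EReal :=
  WithTop.recTopCoe ⊤ (fun t : ℕ => ((Real.log t : ℝ) : EReal)) m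

/-- `τ^{(r)}_{P_G} = lim_{q→1⁻} limsup_{n→∞} ln(τ^{(r)}_{P_G}(q,n)) / ln n`; since
`q ↦ limsup_n …` is non-decreasing, the limit as `q → 1⁻` equals the supremum over
`q ∈ (0,1)`. -/
noncomputable def tauExp {V : Type*} (r s : ℕ) (E : Finset (Finset V)) : EReal :=
  ⨆ q ∈ Set.Ioo (0 : ℝ≥0∞) 1,
    Filter.limsup
      (fun n : ℕ => elog (tauQ r s E q n) * (((Real.log n)⁻¹ : ℝ) : EReal)) atTop

/-- The hypergraph with edge set `E` is `d`-degenerate: every (induced, hence every)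
sub-hypergraph has a vertex of degree at most `d`. -/
def Degen {V : Type*} [DecidableEq V] (E : Finset (Finset V)) (d : ℕ) : Prop :=
  ∀ S : Finset V, S.Nonempty → ∃ v ∈ S, (E.filter fun e => v ∈ e ∧ e ⊆ S).card ≤ d

/-- The hypergraph with edge set `E` has degeneracy exactly `d`. -/
def DegeneracyEq {V : Type*} [DecidableEq V] (E : Finset (Finset V)) (d : ℕ) : Prop :=
  Degen E d ∧ ∀ d' : ℕ, Degen E d' → d ≤ d'

end SemiRandomHypergraph

/-!
If a copy of `A` is built, then its edges are created in distinct rounds. In the round creating the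
first of them there are at most `s ^ s * n ^ (|V(A)| - s)` ways to place the vertices of `A`, and
each of the other `|A| - 1` edges requires the random set `U_t` to fall inside a prescribed `s`-set,
which happens with probability at most `(s / n) ^ r` however the player replies. Summing over the
rounds, a copy of `A` appears within `t` rounds with probability
`O(n ^ (|V(A)| - s) * n ^ (-r * (|A| - 1)) * t ^ |A|)`, which tends to zero when `t` is a smaller
power of `n` than `r - (|V(A)| - s + r) / |A|`. Apply this to the densest sub-hypergraph.
-/

open scoped Finset

namespace SemiRandomHypergraph

/-! ### Expectations over discrete distributions -/

section Expectation

variable {α β : Type*} (P : PMF α)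

/-- The expectation of a nonnegative function under `P`, as a sum: unlike an integral against
`P.toMeasure` it needs no measurable structure, which spaces of histories do not carry. -/
noncomputable def expectation (f : α → ℝ≥0∞) : ℝ≥0∞ := ∑' a, P a * f a

variable {P} in
lemma expectation_mono {f g : α → ℝ≥0∞} (h : ∀ a, f a ≤ g a) :
    expectation P f ≤ expectation P g :=
  ENNReal.tsum_le_tsum fun a => mul_le_mul_right (h a) _

lemma expectation_const (c : ℝ≥0∞) : expectation P (fun _ => c) = c := by
  rw [expectation, ENNReal.tsum_mul_right, P.tsum_coe, one_mul]

variable {P} in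
lemma expectation_le_of_forall_le {f : α → ℝ≥0∞} {c : ℝ≥0∞} (h : ∀ a, f a ≤ c) :
    expectation P f ≤ c :=
  (expectation_mono h).trans_eq (expectation_const P c)

lemma expectation_add (f g : α → ℝ≥0∞) :
    expectation P (fun a => f a + g a) = expectation P f + expectation P g := by
  simp only [expectation, mul_add, ENNReal.tsum_add]

lemma expectation_const_mul (c : ℝ≥0∞) (f : α → ℝ≥0∞) :
    expectation P (fun a => c * f a) = c * expectation P f := by
  simp only [expectation, mul_left_comm, ENNReal.tsum_mul_left]

lemma expectation_mul_const (c : ℝ≥0∞) (f : α → ℝ≥0∞) :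
    expectation P (fun a => f a * c) = expectation P f * c := by
  simp only [expectation, ← mul_assoc, ENNReal.tsum_mul_right]

lemma expectation_sum {ι : Type*} (A : Finset ι) (f : ι → α → ℝ≥0∞) :
    expectation P (fun a => ∑ i ∈ A, f i a) = ∑ i ∈ A, expectation P (f i) := by
  simp only [expectation, Finset.mul_sum]
  exact Summable.tsum_finsetSum fun _ _ => ENNReal.summable

lemma expectation_pure (a : α) (f : α → ℝ≥0∞) : expectation (PMF.pure a) f = f a := by
  rw [expectation, tsum_eq_single a fun b hb => by simp [PMF.pure_apply, hb]]
  simp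

lemma expectation_bind (Q : α → PMF β) (f : β → ℝ≥0∞) :
    expectation (P.bind Q) f = expectation P fun a => expectation (Q a) f := by
  simp only [expectation, PMF.bind_apply, ← ENNReal.tsum_mul_right, ← ENNReal.tsum_mul_left,
    mul_assoc]
  exact ENNReal.tsum_comm

lemma expectation_map (g : α → β) (f : β → ℝ≥0∞) :
    expectation (P.map g) f = expectation P fun a => f (g a) := by
  simp only [← PMF.bind_pure_comp, expectation_bind, Function.comp_apply, expectation_pure]

variable {P} in
lemma toOuterMeasure_le_expectation {B : Set α} {f : α → ℝ≥0∞} (h : ∀ a ∈ B, 1 ≤ f a) :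
    P.toOuterMeasure B ≤ expectation P f := by
  rw [PMF.toOuterMeasure_apply]
  refine ENNReal.tsum_le_tsum fun a => Set.indicator_apply_le' (fun ha => ?_) fun _ => zero_le
  exact le_mul_of_one_le_right' (h a ha)

end Expectation

/-! ### Counting -/

lemma prod_add_of_pairwise_mul_eq_zero {ι R : Type*} [DecidableEq ι] [CommSemiring R]
    (A : Finset ι) (f g : ι → R) (h : (A : Set ι).Pairwise fun i j => g i * g j = 0) :
    ∏ i ∈ A, (f i + g i) = ∏ i ∈ A, f i + ∑ i ∈ A, g i * ∏ j ∈ A.erase i, f j := by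
  induction A using Finset.induction_on with
  | empty => simp
  | insert a A ha ih =>
    have hcross : g a * ∑ i ∈ A, g i * ∏ j ∈ A.erase i, f j = 0 := by
      rw [Finset.mul_sum]
      refine Finset.sum_eq_zero fun i hi => ?_
      rw [← mul_assoc, h (by simp) (by simp [hi]) (by grind), zero_mul]
    have herase : ∀ i ∈ A,
        g i * ∏ j ∈ (insert a A).erase i, f j = f a * (g i * ∏ j ∈ A.erase i, f j) := by
      intro i hi
      rw [Finset.erase_insert_of_ne (by grind), Finset.prod_insert (by grind)]
      ring
    rw [Finset.prod_insert ha, Finset.prod_insert ha, Finset.sum_insert ha,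
      Finset.erase_insert ha, Finset.sum_congr rfl herase, ← Finset.mul_sum,
      ih (h.mono (by simp))]
    calc (f a + g a) * (∏ i ∈ A, f i + ∑ i ∈ A, g i * ∏ j ∈ A.erase i, f j)
        = f a * ∏ i ∈ A, f i + (g a * ∏ i ∈ A, f i + f a * ∑ i ∈ A, g i * ∏ j ∈ A.erase i, f j) +
            g a * ∑ i ∈ A, g i * ∏ j ∈ A.erase i, f j := by ring
      _ = _ := by rw [hcross, add_zero]

lemma card_filter_embedding_mapsTo_le {W β : Type*} [Fintype W] [Fintype β] [DecidableEq W]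
    [DecidableEq β] (e : Finset W) (T : Finset β) :
    #{φ : W ↪ β | ∀ x ∈ e, φ x ∈ T} ≤ #T ^ #e * Fintype.card β ^ (Fintype.card W - #e) := by
  calc #{φ : W ↪ β | ∀ x ∈ e, φ x ∈ T}
      ≤ #(Fintype.piFinset fun x => if x ∈ e then T else Finset.univ) := by
        refine Finset.card_le_card_of_injOn (fun φ => φ) (fun φ hφ => ?_)
          DFunLike.coe_injective.injOn
        simp only [Finset.coe_filter, Finset.mem_univ, true_and, Set.mem_ofPred_eq] at hφ
        simp only [Finset.mem_coe, Fintype.mem_piFinset]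
        intro x
        split_ifs with hx
        exacts [hφ x hx, Finset.mem_univ _]
    _ = #T ^ #e * Fintype.card β ^ (Fintype.card W - #e) := by
        simp [Fintype.card_piFinset, apply_ite Finset.card, Finset.prod_ite, Finset.filter_not,
          Finset.card_univ_sdiff]

lemma descFactorial_mul_pow_le {m n : ℕ} (h : m ≤ n) (r : ℕ) :
    m.descFactorial r * n ^ r ≤ n.descFactorial r * m ^ r := by
  induction r with
  | zero => simp
  | succ r ih =>
    have hfactor : (m - r) * n ≤ (n - r) * m := by
      rw [Nat.sub_mul, Nat.sub_mul, mul_comm n m]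
      exact Nat.sub_le_sub_left (Nat.mul_le_mul_left r h) _
    calc m.descFactorial (r + 1) * n ^ (r + 1)
        = (m - r) * n * (m.descFactorial r * n ^ r) := by rw [Nat.descFactorial_succ]; ring
      _ ≤ (n - r) * m * (n.descFactorial r * m ^ r) := Nat.mul_le_mul hfactor ih
      _ = n.descFactorial (r + 1) * m ^ (r + 1) := by rw [Nat.descFactorial_succ]; ring

lemma choose_mul_pow_le {m n : ℕ} (h : m ≤ n) (r : ℕ) :
    m.choose r * n ^ r ≤ n.choose r * m ^ r := by
  refine Nat.le_of_mul_le_mul_left ?_ r.factorial_pos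
  simpa only [← mul_assoc, ← Nat.descFactorial_eq_factorial_mul_choose] using
    descFactorial_mul_pow_le h r

lemma choose_div_choose_le {m n : ℕ} (h : m ≤ n) (r : ℕ) :
    (m.choose r : ℝ≥0∞) / n.choose r ≤ ((m : ℝ≥0∞) / n) ^ r := by
  rcases n.eq_zero_or_pos with rfl | hn
  · obtain rfl : m = 0 := Nat.le_zero.1 h
    cases r <;> simp
  · have hpow : (n : ℝ≥0∞) ^ r ≠ 0 := pow_ne_zero r (Nat.cast_ne_zero.2 hn.ne')
    have hpow_top : (n : ℝ≥0∞) ^ r ≠ ∞ := ENNReal.pow_ne_top (ENNReal.natCast_ne_top n)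
    refine ENNReal.div_le_of_le_mul ?_
    rw [div_eq_mul_inv, mul_pow, ← ENNReal.inv_pow, ← div_eq_mul_inv, mul_comm, ← mul_div_assoc,
      ENNReal.le_div_iff_mul_le (.inl hpow) (.inl hpow_top)]
    exact_mod_cast choose_mul_pow_le h r

lemma le_mul_pow_of_succ_le {a : ℕ → ℝ≥0∞} {K : ℝ≥0∞} {m : ℕ} (hzero : a 0 = 0)
    (hsucc : ∀ t : ℕ, a (t + 1) ≤ a t + (m + 1 : ℕ) * (K * (t : ℝ≥0∞) ^ m)) (t : ℕ) :
    a t ≤ K * (t : ℝ≥0∞) ^ (m + 1) := by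
  induction t with
  | zero => simp [hzero]
  | succ t ih =>
    have bernoulli : (t : ℝ≥0∞) ^ (m + 1) + (m + 1 : ℕ) * (t : ℝ≥0∞) ^ m ≤
        ((t + 1 : ℕ) : ℝ≥0∞) ^ (m + 1) := by
      have := pow_add_mul_le_add_pow (a := t) (b := 1) (by omega) (by omega) (m + 1)
      exact_mod_cast (by simpa using this : t ^ (m + 1) + (m + 1) * t ^ m ≤ (t + 1) ^ (m + 1))
    calc a (t + 1) ≤ K * (t : ℝ≥0∞) ^ (m + 1) + (m + 1 : ℕ) * (K * (t : ℝ≥0∞) ^ m) :=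
          (hsucc t).trans (by gcongr)
      _ = K * ((t : ℝ≥0∞) ^ (m + 1) + (m + 1 : ℕ) * (t : ℝ≥0∞) ^ m) := by ring
      _ ≤ K * ((t + 1 : ℕ) : ℝ≥0∞) ^ (m + 1) := by gcongr

lemma expectation_uniformOfFintype_subset_le {n r : ℕ} [Nonempty (Col n r)] (T : Finset (Fin n)) :
    expectation (PMF.uniformOfFintype (Col n r)) (fun U => if U.1 ⊆ T then 1 else 0) ≤
      ((#T : ℝ≥0∞) / n) ^ r := by
  have hcount : #{U : Col n r | U.1 ⊆ T} ≤ (#T).choose r := by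
    rw [← Finset.card_powersetCard]
    exact Finset.card_le_card_of_injOn Subtype.val
      (fun U hU => by simpa [Finset.mem_powersetCard, U.2] using hU) Subtype.val_injective.injOn
  have hT : #T ≤ n := by simpa using T.card_le_univ
  calc expectation (PMF.uniformOfFintype (Col n r)) (fun U => if U.1 ⊆ T then 1 else 0)
      = (#{U : Col n r | U.1 ⊆ T} : ℝ≥0∞) / n.choose r := by
        simp only [expectation, tsum_fintype, PMF.uniformOfFintype_apply, ← Finset.mul_sum,
          Finset.sum_boole, Fintype.card_finset_len, Fintype.card_fin]
        rw [mul_comm, div_eq_mul_inv]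
    _ ≤ ((#T).choose r : ℝ≥0∞) / n.choose r := by gcongr
    _ ≤ ((#T : ℝ≥0∞) / n) ^ r := choose_div_choose_le hT r

/-! ### The expected number of copies -/

section Copies

variable {W : Type*} {n r s : ℕ}

/-- The edge created in the round `p` is the image of `e` under the placement `φ` of the
vertices. -/
abbrev Realizes (φ : W ↪ Fin n) (p : Step n r s) (e : Finset W) : Prop :=
  Multiset.map φ e.val = p.1.1.val + p.2.1.val

lemma Realizes.eq_of_realizes {φ : W ↪ Fin n} {p : Step n r s} {e e' : Finset W}
    (h : Realizes φ p e) (h' : Realizes φ p e') : e = e' :=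
  Finset.val_injective (Multiset.map_injective φ.injective (h.trans h'.symm))

lemma Realizes.subset_map {φ : W ↪ Fin n} {p : Step n r s} {e : Finset W}
    (h : Realizes φ p e) : p.1.1 ⊆ e.map φ := by
  rw [← Finset.val_le_iff, Finset.map_val, h]
  exact Multiset.le_add_right _ _

lemma Realizes.apply_mem_union {φ : W ↪ Fin n} {p : Step n r s} {e : Finset W}
    (h : Realizes φ p e) {x : W} (hx : x ∈ e) : φ x ∈ p.1.1 ∪ p.2.1 := by
  have : φ x ∈ Multiset.map φ e.val := Multiset.mem_map_of_mem φ hx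
  simpa [h] using this

/-- The distribution of a round in which the player answers according to `reply`. -/
noncomputable def roundPMF [Nonempty (Col n r)] (reply : Col n r → PMF (Col n (s - r))) :
    PMF (Step n r s) :=
  (PMF.uniformOfFintype (Col n r)).bind fun U => (reply U).map (Prod.mk U)

lemma expectation_historyPMF_succ [h : Nonempty (Col n r)] (S : Strategy n r s) (t : ℕ)
    (f : List (Step n r s) → ℝ≥0∞) :
    expectation (historyPMF h S (t + 1)) f =
      expectation (historyPMF h S t) fun hist =>
        expectation (roundPMF (S hist)) fun p => f (p :: hist) := by
  simp only [historyPMF, roundPMF, expectation_bind, expectation_map]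

lemma expectation_realizes_le [Nonempty (Col n r)] (reply : Col n r → PMF (Col n (s - r)))
    (φ : W ↪ Fin n) (e : Finset W) :
    expectation (roundPMF reply) (fun p => if Realizes φ p e then 1 else 0) ≤
      ((#e : ℝ≥0∞) / n) ^ r := by
  simp only [roundPMF, expectation_bind, expectation_map]
  rw [← Finset.card_map φ]
  refine (expectation_mono fun U => expectation_le_of_forall_le fun V => ?_).trans
    (expectation_uniformOfFintype_subset_le (e.map φ))
  split_ifs with hreal hsub
  exacts [le_rfl, absurd hreal.subset_map hsub, zero_le, le_rfl]

variable [Fintype W]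

lemma card_filter_realizes_le (hrs : r ≤ s) (p : Step n r s) (e : Finset W) :
    #{φ : W ↪ Fin n | Realizes φ p e} ≤ s ^ #e * n ^ (Fintype.card W - #e) := by
  classical
  have hcard : #(p.1.1 ∪ p.2.1) ≤ s := by
    have := Finset.card_union_le p.1.1 p.2.1
    have := p.1.2
    have := p.2.2
    omega
  calc #{φ : W ↪ Fin n | Realizes φ p e}
      ≤ #{φ : W ↪ Fin n | ∀ x ∈ e, φ x ∈ p.1.1 ∪ p.2.1} :=
        Finset.card_le_card <| Finset.monotone_filter_right _
          fun _ _ hφ _ hx => hφ.apply_mem_union hx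
    _ ≤ #(p.1.1 ∪ p.2.1) ^ #e * n ^ (Fintype.card W - #e) := by
        simpa using card_filter_embedding_mapsTo_le e (p.1.1 ∪ p.2.1)
    _ ≤ s ^ #e * n ^ (Fintype.card W - #e) := by gcongr

/-- The number of copies of the hypergraph `A`, counted with multiplicity: a placement `φ` of the
vertices is counted once for every way of choosing, for each edge `e` of `A`, a round creating
`φ(e)`. -/
noncomputable def copyCount (A : Finset (Finset W)) (hist : List (Step n r s)) : ℕ :=
  ∑ φ : W ↪ Fin n, ∏ e ∈ A, hist.countP fun p => Realizes φ p e

/-- The number of copies of `A` gained when the round `p` follows `hist`, in which the edge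
created by `p` plays the role of `e`. -/
noncomputable def newCopyCount [DecidableEq W] (A : Finset (Finset W)) (e : Finset W)
    (p : Step n r s) (hist : List (Step n r s)) : ℕ :=
  ∑ φ : W ↪ Fin n, (if Realizes φ p e then 1 else 0) *
    ∏ e' ∈ A.erase e, hist.countP fun p => Realizes φ p e'

lemma copyCount_nil {A : Finset (Finset W)} (hA : A.Nonempty) :
    copyCount A ([] : List (Step n r s)) = 0 := by
  obtain ⟨e, he⟩ := hA
  exact Finset.sum_eq_zero fun φ _ => Finset.prod_eq_zero he List.countP_nil

lemma copyCount_cons [DecidableEq W] (A : Finset (Finset W)) (p : Step n r s)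
    (hist : List (Step n r s)) :
    copyCount A (p :: hist) = copyCount A hist + ∑ e ∈ A, newCopyCount A e p hist := by
  simp only [copyCount, newCopyCount]
  rw [Finset.sum_comm, ← Finset.sum_add_distrib]
  refine Finset.sum_congr rfl fun φ _ => ?_
  simp only [List.countP_cons, decide_eq_true_eq]
  refine prod_add_of_pairwise_mul_eq_zero A _ _ fun e _ e' _ hne => ?_
  by_contra hmul
  simp only [mul_eq_zero, ite_eq_right_iff, one_ne_zero, imp_false, not_or, not_not] at hmul
  exact hne (hmul.1.eq_of_realizes hmul.2)

lemma one_le_copyCount {A : Finset (Finset W)} {hist : List (Step n r s)}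
    (h : ContainsCopy A hist) : 1 ≤ copyCount A hist := by
  obtain ⟨φ, hφ⟩ := h
  calc 1 ≤ ∏ e ∈ A, hist.countP fun p => Realizes φ p e :=
        Finset.one_le_prod' fun e he =>
          List.countP_pos_iff.2 (by simpa only [decide_eq_true_eq] using hφ e he)
    _ ≤ copyCount A hist :=
        Finset.single_le_sum
          (f := fun φ : W ↪ Fin n => ∏ e ∈ A, hist.countP fun p => Realizes φ p e)
          (fun _ _ => zero_le) (Finset.mem_univ φ)

lemma newCopyCount_singleton_le [DecidableEq W] (hrs : r ≤ s) (e : Finset W) (p : Step n r s)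
    (hist : List (Step n r s)) :
    newCopyCount {e} e p hist ≤ s ^ #e * n ^ (Fintype.card W - #e) := by
  simpa [newCopyCount] using card_filter_realizes_le hrs p e

lemma expectation_newCopyCount_le [DecidableEq W] [Nonempty (Col n r)]
    (reply : Col n r → PMF (Col n (s - r))) (A : Finset (Finset W)) (e : Finset W)
    (hist : List (Step n r s)) :
    expectation (roundPMF reply) (fun p => (newCopyCount A e p hist : ℝ≥0∞)) ≤
      ((#e : ℝ≥0∞) / n) ^ r * copyCount (A.erase e) hist := by
  simp only [newCopyCount, copyCount, Nat.cast_sum, Nat.cast_mul, Nat.cast_ite, Nat.cast_one,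
    Nat.cast_zero, expectation_sum, expectation_mul_const, Finset.mul_sum]
  exact Finset.sum_le_sum fun φ _ => mul_le_mul_left (expectation_realizes_le reply φ e) _

variable [h : Nonempty (Col n r)]

lemma expectation_copyCount_zero (S : Strategy n r s) {A : Finset (Finset W)} (hA : A.Nonempty) :
    expectation (historyPMF h S 0) (fun hist => (copyCount A hist : ℝ≥0∞)) = 0 := by
  rw [historyPMF, expectation_pure, copyCount_nil hA, Nat.cast_zero]

lemma expectation_copyCount_succ [DecidableEq W] (S : Strategy n r s) (t : ℕ)
    (A : Finset (Finset W)) :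
    expectation (historyPMF h S (t + 1)) (fun hist => (copyCount A hist : ℝ≥0∞)) =
      expectation (historyPMF h S t) (fun hist => (copyCount A hist : ℝ≥0∞)) +
        ∑ e ∈ A, expectation (historyPMF h S t) fun hist =>
          expectation (roundPMF (S hist)) fun p => (newCopyCount A e p hist : ℝ≥0∞) := by
  simp only [expectation_historyPMF_succ, copyCount_cons, Nat.cast_add, Nat.cast_sum,
    expectation_add, expectation_const, expectation_sum]

lemma expectation_expectation_newCopyCount_le [DecidableEq W] (S : Strategy n r s) (t : ℕ)
    (A : Finset (Finset W)) (e : Finset W) :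
    expectation (historyPMF h S t) (fun hist =>
        expectation (roundPMF (S hist)) fun p => (newCopyCount A e p hist : ℝ≥0∞)) ≤
      ((#e : ℝ≥0∞) / n) ^ r *
        expectation (historyPMF h S t) fun hist => (copyCount (A.erase e) hist : ℝ≥0∞) :=
  (expectation_mono fun hist => expectation_newCopyCount_le (S hist) A e hist).trans_eq
    (expectation_const_mul _ _ _)

theorem expectation_copyCount_le (hrs : r ≤ s) (S : Strategy n r s) {j : ℕ}
    {A : Finset (Finset W)} (hunif : ∀ e ∈ A, #e = s) (hA : #A = j + 1) (t : ℕ) :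
    expectation (historyPMF h S t) (fun hist => (copyCount A hist : ℝ≥0∞)) ≤
      (s : ℝ≥0∞) ^ s * (n : ℝ≥0∞) ^ (Fintype.card W - s) * (((s : ℝ≥0∞) / n) ^ r) ^ j *
        (t : ℝ≥0∞) ^ (j + 1) := by
  classical
  induction j generalizing A t with
  | zero =>
    obtain ⟨e, rfl⟩ := Finset.card_eq_one.1 hA
    have he : #e = s := hunif e (Finset.mem_singleton_self e)
    refine le_mul_pow_of_succ_le (a := fun t => expectation (historyPMF h S t)
      fun hist => (copyCount {e} hist : ℝ≥0∞))
      (expectation_copyCount_zero S (Finset.singleton_nonempty e)) (fun t => ?_) t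
    simp only [expectation_copyCount_succ, Finset.sum_singleton]
    gcongr
    refine expectation_le_of_forall_le fun hist => expectation_le_of_forall_le fun p => ?_
    simpa [he] using Nat.cast_le (α := ℝ≥0∞) |>.2 (newCopyCount_singleton_le hrs e p hist)
  | succ j ih =>
    refine le_mul_pow_of_succ_le (a := fun t => expectation (historyPMF h S t)
      fun hist => (copyCount A hist : ℝ≥0∞))
      (expectation_copyCount_zero S (Finset.card_pos.1 (by omega))) (fun t => ?_) t
    simp only [expectation_copyCount_succ]
    rw [← hA, ← nsmul_eq_mul]
    gcongr
    refine Finset.sum_le_card_nsmul A _ _ fun e he => ?_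
    have herase := ih (A := A.erase e) (fun e' he' => hunif e' (Finset.mem_of_mem_erase he'))
      (by rw [Finset.card_erase_of_mem he, hA, Nat.add_sub_cancel]) t
    calc expectation (historyPMF h S t) (fun hist =>
          expectation (roundPMF (S hist)) fun p => (newCopyCount A e p hist : ℝ≥0∞))
        ≤ ((s : ℝ≥0∞) / n) ^ r * expectation (historyPMF h S t) fun hist =>
            (copyCount (A.erase e) hist : ℝ≥0∞) :=
          hunif e he ▸ expectation_expectation_newCopyCount_le S t A e
      _ ≤ ((s : ℝ≥0∞) / n) ^ r * ((s : ℝ≥0∞) ^ s * (n : ℝ≥0∞) ^ (Fintype.card W - s) *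
            (((s : ℝ≥0∞) / n) ^ r) ^ j * (t : ℝ≥0∞) ^ (j + 1)) := by gcongr
      _ = (s : ℝ≥0∞) ^ s * (n : ℝ≥0∞) ^ (Fintype.card W - s) *
            (((s : ℝ≥0∞) / n) ^ r) ^ (j + 1) * (t : ℝ≥0∞) ^ (j + 1) := by ring

end Copies

section Probability

variable {V W : Type*} {n r s : ℕ}

theorem probContains_le [Fintype W] (hrs : r ≤ s) {j : ℕ} {A : Finset (Finset W)}
    (hunif : ∀ e ∈ A, #e = s) (hA : #A = j + 1) (S : Strategy n r s) (t : ℕ) :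
    probContains n r s A S t ≤
      (s : ℝ≥0∞) ^ s * (n : ℝ≥0∞) ^ (Fintype.card W - s) * (((s : ℝ≥0∞) / n) ^ r) ^ j *
        (t : ℝ≥0∞) ^ (j + 1) := by
  classical
  rw [probContains]
  split_ifs with hrn
  · have := col_nonempty hrn
    exact (toOuterMeasure_le_expectation fun hist hcopy =>
      Nat.one_le_cast.2 (one_le_copyCount hcopy)).trans (expectation_copyCount_le hrs S hunif hA t)
  · exact zero_le

lemma probContains_le_ofReal_rpow [Fintype W] (hrs : r ≤ s) {j : ℕ} {A : Finset (Finset W)}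
    (hunif : ∀ e ∈ A, #e = s) (hA : #A = j + 1) (S : Strategy n r s) {t : ℕ} {c : ℝ}
    (hn : 0 < n) (ht : (t : ℝ) ≤ (n : ℝ) ^ c) :
    probContains n r s A S t ≤ ENNReal.ofReal
      ((s : ℝ) ^ (s + r * j) * (n : ℝ) ^ ((Fintype.card W - s : ℝ) - r * j + c * (j + 1))) := by
  have hn' : (0 : ℝ) < n := Nat.cast_pos.2 hn
  have hs : s ≤ Fintype.card W := by
    obtain ⟨e, he⟩ := Finset.card_pos.1 (by omega : 0 < #A)
    exact hunif e he ▸ e.card_le_univ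
  calc probContains n r s A S t ≤ _ := probContains_le hrs hunif hA S t
    _ = ENNReal.ofReal ((s : ℝ) ^ s * (n : ℝ) ^ (Fintype.card W - s) *
          (((s : ℝ) / n) ^ r) ^ j * (t : ℝ) ^ (j + 1)) := by
        simp (disch := positivity) only [ENNReal.ofReal_mul, ENNReal.ofReal_pow,
          ENNReal.ofReal_div_of_pos, ENNReal.ofReal_natCast]
    _ ≤ ENNReal.ofReal ((s : ℝ) ^ s * (n : ℝ) ^ (Fintype.card W - s) *
          (((s : ℝ) / n) ^ r) ^ j * ((n : ℝ) ^ c) ^ (j + 1)) := by gcongr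
    _ = _ := by
        rw [Real.rpow_add hn', Real.rpow_sub hn', ← Nat.cast_sub hs, ← Nat.cast_mul,
          ← Nat.cast_add_one, Real.rpow_mul hn'.le, Real.rpow_natCast, Real.rpow_natCast,
          Real.rpow_natCast]
        congr 1
        rw [← pow_mul, div_pow]
        ring

lemma containsCopy_of_map_mem {A : Finset (Finset W)} {E : Finset (Finset V)} (ι : W ↪ V)
    (hι : ∀ e ∈ A, e.map ι ∈ E) {hist : List (Step n r s)} (h : ContainsCopy E hist) :
    ContainsCopy A hist := by
  obtain ⟨φ, hφ⟩ := h
  refine ⟨ι.trans φ, fun e he => ?_⟩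
  obtain ⟨p, hp, hreal⟩ := hφ _ (hι e he)
  exact ⟨p, hp, by simpa using hreal⟩

lemma probContains_le_of_map_mem {A : Finset (Finset W)} {E : Finset (Finset V)} (ι : W ↪ V)
    (hι : ∀ e ∈ A, e.map ι ∈ E) (S : Strategy n r s) (t : ℕ) :
    probContains n r s E S t ≤ probContains n r s A S t := by
  unfold probContains
  split_ifs
  · exact MeasureTheory.measure_mono fun _ => containsCopy_of_map_mem ι hι
  · exact le_rfl

end Probability

/-! ### The exponent `τ` -/

section Exponent

variable {V W : Type*} {n r s : ℕ}

lemma le_tauQ_iff {E : Finset (Finset V)} {q : ℝ≥0∞} {m : ℕ∞} :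
    m ≤ tauQ r s E q n ↔
      ∀ (S : Strategy n r s) (t : ℕ), q ≤ probContains n r s E S t → m ≤ t := by
  simp only [tauQ, le_iInf_iff, le_sInf_iff, Set.mem_ofPred_eq, forall_exists_index, and_imp]
  exact forall_congr' fun S => ⟨fun h t ht => h t t rfl ht, fun h _ t ht hq => ht ▸ h t hq⟩

lemma elog_natCast (m : ℕ) : elog m = (Real.log m : ℝ) := rfl

lemma elog_mono : Monotone elog := by
  intro a b hab
  induction b using WithTop.recTopCoe with
  | top => exact le_top
  | coe b =>
    lift a to ℕ using ne_top_of_le_ne_top (ENat.natCast_ne_top b) hab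
    have hab' : a ≤ b := Nat.cast_le.1 hab
    change ((Real.log a : ℝ) : EReal) ≤ (Real.log b : ℝ)
    rw [EReal.coe_le_coe_iff]
    rcases a.eq_zero_or_pos with rfl | ha
    · simpa using Real.log_natCast_nonneg b
    · exact Real.log_le_log (Nat.cast_pos.2 ha) (Nat.cast_le.2 hab')

lemma tauExp_le_of_map_mem {A : Finset (Finset W)} {E : Finset (Finset V)} (ι : W ↪ V)
    (hι : ∀ e ∈ A, e.map ι ∈ E) : tauExp r s A ≤ tauExp r s E := by
  refine iSup₂_mono fun q _ => limsup_le_limsup (Eventually.of_forall fun n => ?_)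
  have htau : tauQ r s A q n ≤ tauQ r s E q n := le_tauQ_iff.2 fun S t hq =>
    le_tauQ_iff.1 le_rfl S t (hq.trans (probContains_le_of_map_mem ι hι S t))
  exact mul_le_mul_of_nonneg_right (elog_mono htau)
    (EReal.coe_nonneg.2 (inv_nonneg.2 (Real.log_natCast_nonneg n)))

lemma coe_le_elog_mul_inv_log (hn : 1 < n) {c : ℝ} {m : ℕ∞} (hm : (⌈(n : ℝ) ^ c⌉₊ : ℕ∞) ≤ m) :
    (c : EReal) ≤ elog m * ((Real.log n)⁻¹ : ℝ) := by
  have hn' : (1 : ℝ) < n := Nat.one_lt_cast.2 hn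
  have hlog : 0 < Real.log n := Real.log_pos hn'
  have hceil : c * Real.log n ≤ Real.log ⌈(n : ℝ) ^ c⌉₊ := by
    rw [← Real.log_rpow (by positivity)]
    exact Real.log_le_log (by positivity) (Nat.le_ceil _)
  calc (c : EReal) ≤ elog ⌈(n : ℝ) ^ c⌉₊ * ((Real.log n)⁻¹ : ℝ) := by
        rw [elog_natCast, ← EReal.coe_mul, EReal.coe_le_coe_iff]
        exact (le_mul_inv_iff₀ hlog).2 hceil
    _ ≤ elog m * ((Real.log n)⁻¹ : ℝ) :=
        mul_le_mul_of_nonneg_right (elog_mono hm) (EReal.coe_nonneg.2 (inv_nonneg.2 hlog.le))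

lemma coe_le_tauExp_of_frequently {E : Finset (Finset V)} {q : ℝ≥0∞} (hq : q ∈ Set.Ioo 0 1)
    {c : ℝ} (h : ∃ᶠ n : ℕ in atTop, ∀ (S : Strategy n r s) (t : ℕ),
      q ≤ probContains n r s E S t → (n : ℝ) ^ c ≤ t) :
    (c : EReal) ≤ tauExp r s E := by
  refine le_trans (le_limsup_of_frequently_le ?_ (by isBoundedDefault))
    (le_iSup₂ (f := fun q _ => limsup
      (fun n : ℕ => elog (tauQ r s E q n) * (((Real.log n)⁻¹ : ℝ) : EReal)) atTop) q hq)
  refine (h.and_eventually (eventually_gt_atTop 1)).mono fun n ⟨hrounds, hn⟩ => ?_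
  exact coe_le_elog_mul_inv_log hn <| le_tauQ_iff.2 fun S t ht =>
    Nat.cast_le.2 (Nat.ceil_le.2 (hrounds S t ht))

theorem sub_div_card_le_tauExp [Fintype W] (hrs : r ≤ s) {A : Finset (Finset W)}
    (hunif : ∀ e ∈ A, #e = s) (hA : A.Nonempty) :
    ((r - ((Fintype.card W : ℝ) - s + r) / #A : ℝ) : EReal) ≤ tauExp r s A := by
  obtain ⟨j, hj⟩ : ∃ j, #A = j + 1 := Nat.exists_eq_succ_of_ne_zero hA.card_ne_zero
  refine EReal.ge_of_forall_gt_iff_ge.1 fun c hc => ?_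
  have hexponent : (Fintype.card W - s : ℝ) - r * j + c * (j + 1) < 0 := by
    rw [EReal.coe_lt_coe_iff, hj, lt_sub_comm, div_lt_iff₀ (by positivity)] at hc
    push_cast at hc
    linarith
  have hlim : Tendsto (fun n : ℕ => (s : ℝ) ^ (s + r * j) *
      (n : ℝ) ^ ((Fintype.card W - s : ℝ) - r * j + c * (j + 1))) atTop (nhds 0) := by
    have := ((tendsto_rpow_neg_atTop (neg_pos.2 hexponent)).comp
      tendsto_natCast_atTop_atTop).const_mul ((s : ℝ) ^ (s + r * j))
    simpa using this
  refine coe_le_tauExp_of_frequently (q := ENNReal.ofReal (1 / 2))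
    ⟨by simp, ENNReal.ofReal_lt_one.2 (by norm_num)⟩ (Eventually.frequently ?_)
  filter_upwards [hlim.eventually_lt_const one_half_pos, eventually_gt_atTop 0] with n hsmall hn
  intro S t ht
  by_contra! hlt
  have hle := ht.trans (probContains_le_ofReal_rpow hrs hunif hj S hn hlt.le)
  exact hsmall.not_ge ((ENNReal.ofReal_le_ofReal_iff (by positivity)).1 hle)

end Exponent

/-! ### Densities of sub-hypergraphs -/

section Density

variable {V : Type*} {r s : ℕ} {E : Finset (Finset V)}

lemma exists_map_mapEmbedding_eq {E' : Finset (Finset V)} {S : Finset V}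
    (hS : ∀ e ∈ E', e ⊆ S) : ∃ A : Finset (Finset S),
      A.map (Finset.mapEmbedding (Function.Embedding.subtype (· ∈ S))).toEmbedding = E' := by
  classical
  have hsub : E' ⊆ Finset.univ.map
      (Finset.mapEmbedding (Function.Embedding.subtype (· ∈ S))).toEmbedding := by
    intro e he
    simp only [Finset.mem_map, Finset.mem_univ, true_and]
    exact ⟨e.subtype (· ∈ S), Finset.subtype_map_of_mem (hS e he)⟩
  obtain ⟨A, -, hA⟩ := Finset.subset_map_iff.1 hsub
  exact ⟨A, hA.symm⟩

theorem sub_div_card_le_tauExp_of_subset (hrs : r ≤ s) (hunif : ∀ e ∈ E, #e = s)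
    {E' : Finset (Finset V)} {S : Finset V} (hE' : E' ⊆ E) (hne : E'.Nonempty)
    (hS : ∀ e ∈ E', e ⊆ S) :
    ((r - ((#S : ℝ) - s + r) / #E' : ℝ) : EReal) ≤ tauExp r s E := by
  obtain ⟨A, rfl⟩ := exists_map_mapEmbedding_eq hS
  have hmem : ∀ e ∈ A, e.map (Function.Embedding.subtype (· ∈ S)) ∈ E := fun e he =>
    hE' (Finset.mem_map_of_mem _ he)
  have hbound := sub_div_card_le_tauExp hrs (A := A)
    (fun e he => by rw [← hunif _ (hmem e he), Finset.card_map]) (Finset.map_nonempty.1 hne)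
  rw [Fintype.card_coe] at hbound
  rw [Finset.card_map]
  exact hbound.trans (tauExp_le_of_map_mem _ hmem)

variable (r s E) in
/-- The densities `|E(G')| / (|V(G')| - s + r)` of the sub-hypergraphs `G'` of the hypergraph `G`
with edge set `E` that have at least `s` vertices; their supremum is `μ_G^{(r,s)}`. -/
def densities : Set ℝ :=
  {x : ℝ | ∃ (S : Finset V) (E' : Finset (Finset V)),
    E' ⊆ E ∧ (∀ e ∈ E', e ⊆ S) ∧ s ≤ #S ∧ x = (#E' : ℝ) / ((#S : ℝ) - s + r)}

-- For a given edge set the density is largest when there are no isolated vertices, so that only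
-- finitely many sub-hypergraphs compete.
lemma exists_isGreatest_densities (hr : 0 < r) (hunif : ∀ e ∈ E, #e = s) (hE : E.Nonempty) :
    ∃ (S : Finset V) (E' : Finset (Finset V)), E' ⊆ E ∧ E'.Nonempty ∧ (∀ e ∈ E', e ⊆ S) ∧
      IsGreatest (densities r s E) ((#E' : ℝ) / ((#S : ℝ) - s + r)) := by
  classical
  have hr' : (0 : ℝ) < r := Nat.cast_pos.2 hr
  have hs : ∀ {E' : Finset (Finset V)}, E' ⊆ E → E'.Nonempty → s ≤ #(E'.biUnion id) := by
    rintro E' hE' ⟨e, he⟩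
    exact hunif e (hE' he) ▸ Finset.card_le_card (Finset.subset_biUnion_of_mem id he)
  let density (E' : Finset (Finset V)) : ℝ := (#E' : ℝ) / ((#(E'.biUnion id) : ℝ) - s + r)
  have hpos : ∀ {m : ℕ}, s ≤ m → 0 < (m : ℝ) - s + r := fun hm =>
    add_pos_of_nonneg_of_pos (sub_nonneg.2 (Nat.cast_le.2 hm)) hr'
  obtain ⟨E', hE', hmax⟩ := {F ∈ E.powerset | F.Nonempty}.exists_max_image density
    ⟨E, by simpa using hE⟩
  simp only [Finset.mem_filter, Finset.mem_powerset, and_imp] at hE' hmax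
  have hsub : ∀ e ∈ E', e ⊆ E'.biUnion id := fun e he => Finset.subset_biUnion_of_mem id he
  refine ⟨E'.biUnion id, E', hE'.1, hE'.2, hsub,
    ⟨_, E', hE'.1, hsub, hs hE'.1 hE'.2, rfl⟩, ?_⟩
  rintro _ ⟨S, F, hF, hFS, -, rfl⟩
  rcases F.eq_empty_or_nonempty with rfl | hne
  · simpa using div_nonneg (Nat.cast_nonneg #E') (hpos (hs hE'.1 hE'.2)).le
  · have hspan : #(F.biUnion id) ≤ #S := Finset.card_le_card (Finset.biUnion_subset.2 hFS)
    calc (#F : ℝ) / ((#S : ℝ) - s + r) ≤ density F :=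
          div_le_div_of_nonneg_left (Nat.cast_nonneg _) (hpos (hs hF hne)) (by gcongr)
      _ ≤ density E' := hmax F hF hne

end Density

end SemiRandomHypergraph

open SemiRandomHypergraph in
theorem semiRandom_hypergraph_density_lower_bound_general {V : Type*} {r s : ℕ}
    (hr : 1 ≤ r) (hrs : r ≤ s) {E : Finset (Finset V)} (hunif : ∀ e ∈ E, #e = s)
    (hE : E.Nonempty) :
    ((r - 1 / sSup (densities r s E) : ℝ) : EReal) ≤ tauExp r s E := by
  obtain ⟨S, E', hE', hne, hS, hmax⟩ := exists_isGreatest_densities hr hunif hE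
  rw [hmax.csSup_eq, one_div_div]
  exact sub_div_card_le_tauExp_of_subset hrs hunif hE' hne hS

open SemiRandomHypergraph in
/-- **Corollary 7.** Let `k ≥ s ≥ r ≥ 2` and let `G` be an `s`-uniform hypergraph on `k`
vertices (with at least one edge). With
`μ_G^{(r,s)} = max_{G' ⊆ G, |V(G')| ≥ s} |E(G')| / (|V(G')| - s + r)`, we have
`τ^{(r)}_{P_G} ≥ r - 1/μ_G^{(r,s)}`. -/
theorem semiRandom_hypergraph_density_lower_bound
    {V : Type*} [Fintype V] [DecidableEq V] (r s k : ℕ)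
    (hr : 2 ≤ r) (hrs : r ≤ s) (hsk : s ≤ k)
    (E : Finset (Finset V)) (hunif : ∀ e ∈ E, e.card = s)
    (hk : Fintype.card V = k) (hE : E.Nonempty)
    (μ : ℝ)
    (hμ : μ = sSup {x : ℝ | ∃ (S : Finset V) (E' : Finset (Finset V)),
      E' ⊆ E ∧ (∀ e ∈ E', e ⊆ S) ∧ s ≤ S.card ∧
      x = (E'.card : ℝ) / ((S.card : ℝ) - s + r)}) :
    ((((r : ℝ) - 1 / μ : ℝ)) : EReal) ≤ tauExp r s E := by
  subst hμ
  exact semiRandom_hypergraph_density_lower_bound_general (by omega) hrs hunif hE
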